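/- Let d ≥ 1, let I ⊆ ℝ be an interval containing t₀, and let B, C, F : I → M_d(ℝ) be continuous matrix-valued maps with C(t) and F(t) symmetric for every t ∈ I. Suppose H : I → M_d(ℂ) is continuously differentiable, H(t) is complex symmetric with Im H(t) positive definite for every t ∈ I, and H satisfies the matrix Riccati equation H′(t) + B(t) H(t) + H(t) B(t)ᵀ + H(t) C(t) H(t) = F(t) on I. Fix c₀ ∈ ℂ and define a₀(t) = c₀ · exp( −(1/2) ∫_{t₀}^{t} tr( B(s) + C(s) H(s) ) ds ). Then the function t ↦ |a₀(t)|² / √(det Im H(t)) is constant on I. -/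

import Mathlib

open MeasureTheory Matrix

/-- Jacobi's formula. -/
lemma hasDerivWithinAt_det_aux {d : ℕ} (Y : ℝ → Matrix (Fin d) (Fin d) ℝ)
    (Y' : Matrix (Fin d) (Fin d) ℝ) (I : Set ℝ) (t : ℝ)
    (h : ∀ i j, HasDerivWithinAt (fun s => Y s i j) (Y' i j) I t) :
    HasDerivWithinAt (fun s => (Y s).det) ((adjugate (Y t) * Y').trace) I t := by
  have h1 : HasDerivWithinAt (fun s => ∑ σ : Equiv.Perm (Fin d),
      ((Equiv.Perm.sign σ : ℤ) : ℝ) * ∏ i, Y s (σ i) i)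
      (∑ σ : Equiv.Perm (Fin d), ((Equiv.Perm.sign σ : ℤ) : ℝ) *
        ∑ i, (∏ j ∈ Finset.univ.erase i, Y t (σ j) j) • Y' (σ i) i) I t := by
    apply HasDerivWithinAt.fun_sum
    intro σ _
    apply HasDerivWithinAt.const_mul
    exact HasDerivWithinAt.fun_finsetProd (fun i _ => h (σ i) i)
  have h2 : (∑ σ : Equiv.Perm (Fin d), ((Equiv.Perm.sign σ : ℤ) : ℝ) *
        ∑ i, (∏ j ∈ Finset.univ.erase i, Y t (σ j) j) • Y' (σ i) i)
      = (adjugate (Y t) * Y').trace := by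
    have h3 : (adjugate (Y t) * Y').trace = ∑ i, ((Y t).updateCol i (fun k => Y' k i)).det := by
      unfold Matrix.trace
      refine Finset.sum_congr rfl fun i _ => ?_
      rw [← cramer_apply, cramer_eq_adjugate_mulVec]
      rfl
    rw [h3]
    simp only [Finset.mul_sum]
    rw [Finset.sum_comm]
    refine Finset.sum_congr rfl fun i _ => ?_
    rw [det_apply']
    refine Finset.sum_congr rfl fun σ _ => ?_
    rw [← Finset.mul_prod_erase Finset.univ _ (Finset.mem_univ i)]
    have h4 : ∏ j ∈ Finset.univ.erase i, ((Y t).updateCol i (fun k => Y' k i)) (σ j) j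
        = ∏ j ∈ Finset.univ.erase i, Y t (σ j) j := by
      refine Finset.prod_congr rfl fun j hj => ?_
      rw [updateCol_ne (Finset.ne_of_mem_erase hj)]
    rw [h4, updateCol_self, smul_eq_mul, mul_comm (Y' (σ i) i)]
  rw [← h2]
  simpa only [det_apply'] using h1

lemma im_mul_aux {d : ℕ} (M N : Matrix (Fin d) (Fin d) ℂ) :
    (M * N).map Complex.im = M.map Complex.re * N.map Complex.im
      + M.map Complex.im * N.map Complex.re := by
  ext i j
  simp [Matrix.mul_apply, Finset.sum_add_distrib]

lemma re_mul_aux {d : ℕ} (M N : Matrix (Fin d) (Fin d) ℂ) :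
    (M * N).map Complex.re = M.map Complex.re * N.map Complex.re
      - M.map Complex.im * N.map Complex.im := by
  ext i j
  simp [Matrix.mul_apply, Finset.sum_sub_distrib]

lemma re_ofReal_aux {d : ℕ} (M : Matrix (Fin d) (Fin d) ℝ) :
    (M.map Complex.ofReal).map Complex.re = M := by
  ext i j; simp

lemma im_ofReal_aux {d : ℕ} (M : Matrix (Fin d) (Fin d) ℝ) :
    (M.map Complex.ofReal).map Complex.im = 0 := by
  ext i j; simp

lemma im_add_aux {d : ℕ} (M N : Matrix (Fin d) (Fin d) ℂ) :
    (M + N).map Complex.im = M.map Complex.im + N.map Complex.im := by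
  ext i j; simp

lemma re_trace_aux {d : ℕ} (B C : Matrix (Fin d) (Fin d) ℝ) (H : Matrix (Fin d) (Fin d) ℂ) :
    (Matrix.trace (B.map Complex.ofReal + C.map Complex.ofReal * H)).re
      = B.trace + (C * H.map Complex.re).trace := by
  simp [Matrix.trace, Matrix.mul_apply, Finset.sum_add_distrib]

lemma riccati_trace_aux {d : ℕ} (B C F : Matrix (Fin d) (Fin d) ℝ)
    (H H' : Matrix (Fin d) (Fin d) ℂ)
    (hric : H' + B.map Complex.ofReal * H + H * (Bᵀ).map Complex.ofReal +
        H * C.map Complex.ofReal * H = F.map Complex.ofReal) :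
    (adjugate (H.map Complex.im) * H'.map Complex.im).trace
      = -(2 * (Matrix.trace (B.map Complex.ofReal + C.map Complex.ofReal * H)).re)
        * (H.map Complex.im).det := by
  rw [re_trace_aux]
  have h := congrArg (fun M => Matrix.map M Complex.im) hric
  simp only [im_add_aux, im_mul_aux, re_mul_aux, re_ofReal_aux, im_ofReal_aux, zero_mul,
    mul_zero, add_zero, zero_add, sub_zero] at h
  set Y := H.map Complex.im
  set X := H.map Complex.re
  have hY : H'.map Complex.im = -(B * Y + Y * Bᵀ + (X * C * Y + Y * C * X)) := by
    rw [eq_neg_iff_add_eq_zero, ← h]; abel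
  rw [hY]
  simp only [mul_neg, trace_neg, mul_add, trace_add]
  have e1 : (adjugate Y * (B * Y)).trace = Y.det * B.trace := by
    rw [trace_mul_comm, Matrix.mul_assoc, mul_adjugate]; simp
  have e2 : (adjugate Y * (Y * Bᵀ)).trace = Y.det * B.trace := by
    rw [← Matrix.mul_assoc, adjugate_mul]; simp
  have e3 : (adjugate Y * (X * C * Y)).trace = Y.det * (C * X).trace := by
    rw [trace_mul_comm, Matrix.mul_assoc, mul_adjugate, trace_mul_comm C X]; simp
  have e4 : (adjugate Y * (Y * C * X)).trace = Y.det * (C * X).trace := by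
    rw [Matrix.mul_assoc Y, ← Matrix.mul_assoc, adjugate_mul]; simp
  rw [e1, e2, e3, e4]
  ring

/-- Constancy of `|a₀|²/√(det Im H)` along the geodesic, where
`a₀(t) = c₀ exp(−(1/2)∫_{t₀}^t tr(B(s) + C(s)H(s)) ds)` is the leading Gaussian beam
amplitude and `H` solves the matrix Riccati equation `H' + BH + HBᵀ + HCH = F` with
`H` complex symmetric and `Im H` positive definite. -/
theorem stmt11 (d : ℕ) (hd : 1 ≤ d) (I : Set ℝ) (hI : I.OrdConnected)
    (t₀ : ℝ) (ht₀ : t₀ ∈ I)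
    (B C F : ℝ → Matrix (Fin d) (Fin d) ℝ)
    (hB : ContinuousOn B I) (hC : ContinuousOn C I) (hF : ContinuousOn F I)
    (hCs : ∀ t ∈ I, (C t).IsSymm) (hFs : ∀ t ∈ I, (F t).IsSymm)
    (H H' : ℝ → Matrix (Fin d) (Fin d) ℂ)
    (hH : ∀ t ∈ I, ∀ i j : Fin d, HasDerivWithinAt (fun s => H s i j) (H' t i j) I t)
    (hH' : ContinuousOn H' I)
    (hHs : ∀ t ∈ I, (H t).IsSymm)
    (hHp : ∀ t ∈ I, ((H t).map Complex.im).PosDef)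
    (hric : ∀ t ∈ I,
      H' t + (B t).map Complex.ofReal * H t + H t * ((B t)ᵀ).map Complex.ofReal +
        H t * (C t).map Complex.ofReal * H t = (F t).map Complex.ofReal)
    (c₀ : ℂ) (a₀ : ℝ → ℂ)
    (ha₀ : ∀ t : ℝ, a₀ t = c₀ * Complex.exp (-(1 / 2 : ℂ) *
      ∫ s in t₀..t,
        Matrix.trace ((B s).map Complex.ofReal + (C s).map Complex.ofReal * H s))) :
    ∀ t ∈ I, ∀ t' ∈ I,
      ‖a₀ t‖ ^ 2 / Real.sqrt (((H t).map Complex.im).det) =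
        ‖a₀ t'‖ ^ 2 / Real.sqrt (((H t').map Complex.im).det) := by
  have hHc : ContinuousOn H I := by
    refine continuousOn_pi.2 fun i => continuousOn_pi.2 fun j => ?_
    exact fun t ht => (hH t ht i j).continuousWithinAt
  set f : ℝ → ℂ := fun s =>
    Matrix.trace ((B s).map Complex.ofReal + (C s).map Complex.ofReal * H s) with hf
  have hfc : ContinuousOn f I := by
    have cB : ContinuousOn (fun s => (B s).map Complex.ofReal) I :=
      (continuous_id.matrix_map Complex.continuous_ofReal).comp_continuousOn hB
    have cC : ContinuousOn (fun s => (C s).map Complex.ofReal) I :=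
      (continuous_id.matrix_map Complex.continuous_ofReal).comp_continuousOn hC
    have cM : ContinuousOn
        (fun s => (B s).map Complex.ofReal + (C s).map Complex.ofReal * H s) I :=
      cB.add (cC.mul hHc)
    exact (continuous_id.matrix_trace).comp_continuousOn cM
  have key : ∀ t ∈ I, ‖a₀ t‖ ^ 2 / Real.sqrt (((H t).map Complex.im).det)
      = ‖c₀‖ ^ 2 / Real.sqrt (((H t₀).map Complex.im).det) := by
    intro t ht
    have hJ : Set.uIcc t₀ t ⊆ I := hI.uIcc_subset ht₀ ht
    have hab : min t₀ t ≤ max t₀ t := min_le_max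
    set g : ℝ → ℂ := Set.IccExtend hab (Set.restrict (Set.Icc (min t₀ t) (max t₀ t)) f) with hg
    have hgc : Continuous g :=
      (continuousOn_iff_continuous_restrict.1 (hfc.mono hJ)).Icc_extend'
    have hgf : ∀ s ∈ Set.uIcc t₀ t, g s = f s := by
      intro s hs
      rw [hg, Set.IccExtend_of_mem hab _ hs]
      rfl
    have hint : ∫ s in t₀..t, f s = ∫ s in t₀..t, g s :=
      intervalIntegral.integral_congr fun s hs => (hgf s hs).symm
    set G : ℝ → ℂ := fun u => ∫ s in t₀..u, g s with hG
    have hGd : ∀ u, HasDerivAt G (g u) u := fun u =>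
      (hgc.integral_hasStrictDerivAt t₀ u).hasDerivAt
    have hGre : ∀ u, HasDerivAt (fun u => (G u).re) (g u).re u := fun u => by
      exact Complex.reCLM.hasFDerivAt.comp_hasDerivAt u (hGd u)
    have hpsi : ∀ u ∈ Set.uIcc t₀ t, HasDerivWithinAt
        (fun u => ((H u).map Complex.im).det * Real.exp (2 * (G u).re)) 0 (Set.uIcc t₀ t) u := by
      intro u hu
      have hd1 := hasDerivWithinAt_det_aux (fun s => (H s).map Complex.im)
        ((H' u).map Complex.im) (Set.uIcc t₀ t) u (fun i j => by
          exact Complex.imCLM.hasFDerivAt.comp_hasDerivWithinAt u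
            ((hH u (hJ hu) i j).mono hJ))
      rw [riccati_trace_aux _ _ _ _ _ (hric u (hJ hu))] at hd1
      have hd2 := (((hGre u).const_mul 2).exp).hasDerivWithinAt (s := Set.uIcc t₀ t)
      refine (hd1.mul hd2).congr_deriv ?_
      rw [hgf u hu]
      simp only [hf]
      ring
    have hconst : ((H t).map Complex.im).det * Real.exp (2 * (G t).re)
        = ((H t₀).map Complex.im).det * Real.exp (2 * (G t₀).re) := by
      have := (convex_uIcc t₀ t).norm_image_sub_le_of_norm_hasDerivWithin_le (C := 0) hpsi
        (by simp) Set.left_mem_uIcc Set.right_mem_uIcc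
      rw [zero_mul] at this
      exact sub_eq_zero.1 (norm_le_zero_iff.1 this)
    have hG0 : G t₀ = 0 := by simp [hG]
    rw [hG0] at hconst
    simp only [Complex.zero_re, mul_zero, Real.exp_zero, mul_one] at hconst
    have hn : ‖a₀ t‖ ^ 2 = ‖c₀‖ ^ 2 * Real.exp (-(G t).re) := by
      rw [ha₀ t]
      change ‖c₀ * Complex.exp (-(1 / 2 : ℂ) * ∫ s in t₀..t, f s)‖ ^ 2 = _
      rw [hint, norm_mul, mul_pow, Complex.norm_exp, ← Real.exp_nat_mul]
      congr 2
      change ((2 : ℕ) : ℝ) * (-(1 / 2 : ℂ) * G t).re = _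
      have : (-(1 / 2 : ℂ) * G t) = ((-(1 / 2) : ℝ) : ℂ) * G t := by push_cast; ring
      rw [this, Complex.re_ofReal_mul]
      push_cast
      ring
    have hp := (hHp t ht).det_pos
    rw [hn, ← hconst, Real.sqrt_mul hp.le, two_mul, Real.exp_add,
      Real.sqrt_mul_self (Real.exp_pos _).le, Real.exp_neg]
    have h1 := Real.sqrt_pos.2 hp
    have h2 := Real.exp_pos (G t).re
    field_simp
  intro t ht t' ht'
  rw [key t ht, key t' ht']
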